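/- Under the stated setup and assumptions, let B = Q*A and let B_k be the best rank-k approximation of B. Then in both the spectral norm and the Frobenius norm one has ‖A − Q·B_k‖ ≤ (1 + (σ_1/σ_k)·(γ_k^{2q}/(1−γ_k))·‖Ω_2Ω_1†‖₂)·‖Σ_⊥‖. -/

import Mathlib

open scoped ENNReal
open Matrix

/-- The `j`-th largest singular value (0-indexed) of a complex matrix,
obtained as the decreasingly sorted square roots of the eigenvalues of `Mᴴ * M`. -/
noncomputable def sval {m n : ℕ} (M : Matrix (Fin m) (Fin n) ℂ) (j : ℕ) : ℝ :=
  (List.insertionSort (· ≥ ·)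
    ((List.ofFn (Matrix.isHermitian_conjTranspose_mul_self M).eigenvalues).map Real.sqrt)).getD j 0

/-- The Schatten-`p` norm (`p = ∞` gives the spectral norm). -/
noncomputable def schatten {m n : ℕ} (p : ℝ≥0∞) (M : Matrix (Fin m) (Fin n) ℂ) : ℝ :=
  if p = ⊤ then sval M 0
  else (∑ j ∈ Finset.range n, sval M j ^ p.toReal) ^ (1 / p.toReal)

/-- Moore–Penrose pseudoinverse of a full-row-rank matrix. -/
noncomputable def rpinv {a b : ℕ} (M : Matrix (Fin a) (Fin b) ℂ) : Matrix (Fin b) (Fin a) ℂ :=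
  Mᴴ * (M * Mᴴ)⁻¹

/-- Rectangular diagonal matrix with entries `σ (off), σ (off+1), …` on the diagonal. -/
noncomputable def diagRect (σ : ℕ → ℝ) (off a b : ℕ) : Matrix (Fin a) (Fin b) ℂ :=
  Matrix.of fun i j => if (i : ℕ) = (j : ℕ) then (σ (off + (i : ℕ)) : ℂ) else 0

/-- The first `b` columns of a matrix with `b + c` columns. -/
def colsL {a b c : ℕ} (M : Matrix (Fin a) (Fin (b + c)) ℂ) : Matrix (Fin a) (Fin b) ℂ :=
  M.submatrix id (Fin.castAdd c)

/-- The last `c` columns of a matrix with `b + c` columns. -/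
def colsR {a b c : ℕ} (M : Matrix (Fin a) (Fin (b + c)) ℂ) : Matrix (Fin a) (Fin c) ℂ :=
  M.submatrix id (Fin.natAdd b)

/-! Write `A = U₁ Σ₁ V₁ᴴ + U₂ Σ₂ V₂ᴴ` and let `P₀ = Q Qᴴ` and `P ≤ P₀` be the projections onto the
range of `Q` and onto the `k` leading left singular vectors of `P₀ A`, so that `Q B_k = P A` and
`‖A - P A‖ ≤ ‖(1 - P) U₁ Σ₁‖ + ‖Σ₂‖`. The power iteration makes `(1 - P₀) U₁ Σ₁` small: on the range
of `Q` the block `U₂` enters damped by `(Σ₂ Σ₂ᴴ) ^ q`, while inverting `(Σ₁ Σ₁ᴴ) ^ q` costs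
`σ_k ^ (-2 q)`. Wedin's argument transfers this bound from `P₀` to `P`, because `A - P₀ A` maps `V₁`
to `(1 - P₀) U₁ Σ₁`; the gap it needs, `‖(1 - P) P₀ A‖ ≤ σ_{k+1} < σ_k`, is the Eckart–Young theorem
applied to `P₀ A` and its rank-`k` competitor `P₀ U₁ Σ₁ V₁ᴴ`. -/

section SingularValues

theorem sum_getD_insertionSort {M : Type*} [AddCommMonoid M] (l : List ℝ) (f : ℝ → M) :
    ∑ j ∈ Finset.range l.length, f ((l.insertionSort (· ≥ ·)).getD j 0) = (l.map f).sum := by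
  rw [← ((List.perm_insertionSort (· ≥ ·) l).map f).sum_eq,
    ← List.length_insertionSort (· ≥ ·) l, Finset.sum_range, ← List.sum_ofFn]
  congr 1
  exact List.ext_getElem (by simp) fun i _ _ => by simp

theorem isGreatest_getD_insertionSort {l : List ℝ} (hl : l ≠ []) :
    IsGreatest {x | x ∈ l} ((l.insertionSort (· ≥ ·)).getD 0 0) := by
  have hsorted := List.pairwise_insertionSort (· ≥ ·) l
  simp only [← List.mem_insertionSort (· ≥ ·) (l := l)]
  rw [← List.length_pos_iff, ← List.length_insertionSort (· ≥ ·) l] at hl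
  obtain ⟨a, t, hat⟩ := List.exists_cons_of_length_pos hl
  rw [hat] at hsorted ⊢
  refine ⟨List.mem_cons_self, fun x hx => ?_⟩
  rcases List.mem_cons.1 hx with rfl | hxt
  · exact le_rfl
  · exact (List.pairwise_cons.1 hsorted).1 x hxt

theorem sum_eigenvalues_conjTranspose_mul_self {𝕜 m n : Type*} [RCLike 𝕜] [Fintype m] [Fintype n]
    [DecidableEq n] (M : Matrix m n 𝕜) :
    ∑ j, (isHermitian_conjTranspose_mul_self M).eigenvalues j = ∑ i, ∑ j, ‖M i j‖ ^ 2 := by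
  have htrace := (isHermitian_conjTranspose_mul_self M).trace_eq_sum_eigenvalues
  rw [Finset.sum_comm]
  simp only [trace, diag_apply, mul_apply, conjTranspose_apply, RCLike.star_def,
    RCLike.conj_mul] at htrace
  exact_mod_cast htrace.symm

open scoped ComplexOrder in
theorem sum_sval_sq {m n : ℕ} (M : Matrix (Fin m) (Fin n) ℂ) :
    ∑ j ∈ Finset.range n, sval M j ^ 2 = ∑ i, ∑ j, ‖M i j‖ ^ 2 := by
  have hsum := sum_getD_insertionSort ((List.ofFn
    (isHermitian_conjTranspose_mul_self M).eigenvalues).map Real.sqrt) (· ^ 2)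
  rw [List.length_map, List.length_ofFn, List.map_map, List.map_ofFn (g := _ ∘ _),
    List.sum_ofFn] at hsum
  rw [← sum_eigenvalues_conjTranspose_mul_self]
  refine hsum.trans (Finset.sum_congr rfl fun j _ => ?_)
  exact Real.sq_sqrt ((posSemidef_conjTranspose_mul_self M).eigenvalues_nonneg j)

open scoped Matrix.Norms.L2Operator in
theorem l2_opNorm_eq_norm_eigenvalues {𝕜 n : Type*} [RCLike 𝕜] [Fintype n] [DecidableEq n]
    {A : Matrix n n 𝕜} (hA : A.IsHermitian) : ‖A‖ = ‖hA.eigenvalues‖ := by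
  conv_lhs => rw [hA.spectral_theorem, Unitary.conjStarAlgAut_apply, ← Unitary.coe_star,
    CStarRing.norm_mul_coe_unitary, CStarRing.norm_coe_unitary_mul, l2_opNorm_diagonal]
  simp only [Pi.norm_def, Function.comp_apply]
  congr! 3 with j
  exact Subtype.ext (RCLike.norm_ofReal (hA.eigenvalues j))

open scoped Matrix.Norms.L2Operator ComplexOrder in
theorem sval_zero {m n : ℕ} (M : Matrix (Fin m) (Fin n) ℂ) : sval M 0 = ‖M‖ := by
  set ev := (isHermitian_conjTranspose_mul_self M).eigenvalues
  have hev_nonneg : ∀ j, 0 ≤ ev j := (posSemidef_conjTranspose_mul_self M).eigenvalues_nonneg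
  have hnorm : ‖M‖ = √‖ev‖ := by
    rw [← l2_opNorm_eq_norm_eigenvalues, l2_opNorm_conjTranspose_mul_self,
      Real.sqrt_mul_self (norm_nonneg M)]
  rcases n with - | n
  · simp [hnorm, sval, Pi.norm_def]
  obtain ⟨hmem, hmax⟩ : IsGreatest {x | x ∈ (List.ofFn ev).map Real.sqrt} (sval M 0) :=
    isGreatest_getD_insertionSort (by simp)
  obtain ⟨i, hi⟩ : ∃ i, √(ev i) = sval M 0 := by simpa [-List.ofFn_succ] using hmem
  rw [hnorm]
  apply le_antisymm
  · rw [← hi]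
    exact Real.sqrt_le_sqrt ((le_abs_self _).trans (norm_le_pi_norm ev i))
  · have hsval : 0 ≤ sval M 0 := hi ▸ Real.sqrt_nonneg _
    rw [Real.sqrt_le_left hsval, pi_norm_le_iff_of_nonneg (sq_nonneg _)]
    intro j
    rw [Real.norm_of_nonneg (hev_nonneg j), ← Real.sqrt_le_left hsval]
    exact hmax (by simp [-List.ofFn_succ])

end SingularValues

section Frobenius

open scoped Matrix.Norms.Frobenius

theorem schatten_two {m n : ℕ} (M : Matrix (Fin m) (Fin n) ℂ) : schatten 2 M = ‖M‖ := by
  rw [schatten, if_neg ENNReal.ofNat_ne_top, frobenius_norm_def]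
  simp only [ENNReal.toReal_ofNat, Real.rpow_two, sum_sval_sq]

theorem schatten_two_add_le {m n : ℕ} (M M' : Matrix (Fin m) (Fin n) ℂ) :
    schatten 2 (M + M') ≤ schatten 2 M + schatten 2 M' := by
  simpa only [schatten_two] using norm_add_le M M'

theorem schatten_two_conjTranspose {m n : ℕ} (M : Matrix (Fin m) (Fin n) ℂ) :
    schatten 2 Mᴴ = schatten 2 M := by
  rw [schatten_two, schatten_two, frobenius_norm_conjTranspose]

theorem schatten_two_nonneg {m n : ℕ} (M : Matrix (Fin m) (Fin n) ℂ) : 0 ≤ schatten 2 M :=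
  schatten_two M ▸ norm_nonneg M

theorem schatten_two_sq {m n : ℕ} (M : Matrix (Fin m) (Fin n) ℂ) :
    schatten 2 M ^ 2 = ∑ j, ‖WithLp.toLp 2 (Mᵀ j)‖ ^ 2 := by
  simp only [EuclideanSpace.norm_sq_eq, transpose_apply]
  rw [Finset.sum_comm, schatten_two, frobenius_norm_def, ← Real.sqrt_eq_rpow, Real.sq_sqrt] <;>
    simp only [Real.rpow_two]
  positivity

end Frobenius

section IdealSeminorm

open scoped Matrix.Norms.L2Operator

/-- A seminorm on matrices of all sizes that is submultiplicative with respect to the spectral norm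
of the other factor on either side. The spectral and the Frobenius norm are examples.
Homogeneity is a consequence of these axioms, a scalar acting as a scalar matrix. -/
structure IsIdealSeminorm {𝕜 : Type*} [RCLike 𝕜]
    (N : ∀ ⦃m n : ℕ⦄, Matrix (Fin m) (Fin n) 𝕜 → ℝ) : Prop where
  nonneg : ∀ ⦃m n : ℕ⦄ (M : Matrix (Fin m) (Fin n) 𝕜), 0 ≤ N M
  add_le : ∀ ⦃m n : ℕ⦄ (M M' : Matrix (Fin m) (Fin n) 𝕜), N (M + M') ≤ N M + N M'
  mul_le_norm_mul : ∀ ⦃l m n : ℕ⦄ (X : Matrix (Fin l) (Fin m) 𝕜) (M : Matrix (Fin m) (Fin n) 𝕜),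
    N (X * M) ≤ ‖X‖ * N M
  mul_le_mul_norm : ∀ ⦃l m n : ℕ⦄ (M : Matrix (Fin l) (Fin m) 𝕜) (X : Matrix (Fin m) (Fin n) 𝕜),
    N (M * X) ≤ N M * ‖X‖

theorem isIdealSeminorm_l2_opNorm {𝕜 : Type*} [RCLike 𝕜] :
    IsIdealSeminorm fun m n (M : Matrix (Fin m) (Fin n) 𝕜) => ‖M‖ where
  nonneg _ _ := norm_nonneg
  add_le _ _ := norm_add_le
  mul_le_norm_mul _ _ _ := l2_opNorm_mul
  mul_le_mul_norm _ _ _ := l2_opNorm_mul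

theorem schatten_top {m n : ℕ} (M : Matrix (Fin m) (Fin n) ℂ) : schatten ⊤ M = ‖M‖ := by
  rw [schatten, if_pos rfl, sval_zero]

theorem schatten_two_mul_le_norm_mul {l m n : ℕ} (X : Matrix (Fin l) (Fin m) ℂ)
    (M : Matrix (Fin m) (Fin n) ℂ) : schatten 2 (X * M) ≤ ‖X‖ * schatten 2 M := by
  refine le_of_sq_le_sq ?_ (mul_nonneg (norm_nonneg X) (schatten_two_nonneg M))
  rw [mul_pow, schatten_two_sq, schatten_two_sq, Finset.mul_sum]
  refine Finset.sum_le_sum fun j _ => ?_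
  rw [← mul_pow]
  exact pow_le_pow_left₀ (norm_nonneg _) (l2_opNorm_mulVec X (WithLp.toLp 2 (Mᵀ j))) 2

theorem schatten_two_mul_le_mul_norm {l m n : ℕ} (M : Matrix (Fin l) (Fin m) ℂ)
    (X : Matrix (Fin m) (Fin n) ℂ) : schatten 2 (M * X) ≤ schatten 2 M * ‖X‖ := by
  rw [← schatten_two_conjTranspose, conjTranspose_mul, ← schatten_two_conjTranspose M, mul_comm,
    ← l2_opNorm_conjTranspose X]
  exact schatten_two_mul_le_norm_mul Xᴴ Mᴴ

theorem isIdealSeminorm_schatten {p : ℝ≥0∞} (hp : p ∈ ({2, ⊤} : Set ℝ≥0∞)) :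
    IsIdealSeminorm fun m n (M : Matrix (Fin m) (Fin n) ℂ) => schatten p M := by
  rcases hp with rfl | rfl
  · exact ⟨fun _ _ => schatten_two_nonneg, fun _ _ => schatten_two_add_le,
      fun _ _ _ => schatten_two_mul_le_norm_mul, fun _ _ _ => schatten_two_mul_le_mul_norm⟩
  · simpa only [schatten_top] using isIdealSeminorm_l2_opNorm

end IdealSeminorm

section Isometry

open scoped Matrix.Norms.L2Operator

variable {𝕜 m n : Type*} [RCLike 𝕜] [Fintype m] [Fintype n]

theorem isStarProjection_mul_conjTranspose [DecidableEq n] {M : Matrix m n 𝕜} (hM : Mᴴ * M = 1) :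
    IsStarProjection (M * Mᴴ) where
  isIdempotentElem := by
    rw [IsIdempotentElem, Matrix.mul_assoc, ← Matrix.mul_assoc Mᴴ, hM, Matrix.one_mul]
  isSelfAdjoint := isHermitian_mul_conjTranspose_self M

theorem conjTranspose_submatrix_mul_submatrix {m n n' : Type*} [Fintype m] [DecidableEq n]
    [DecidableEq n'] {M : Matrix m n 𝕜} (hM : Mᴴ * M = 1) {f : n' → n} (hf : f.Injective) :
    (M.submatrix id f)ᴴ * M.submatrix id f = 1 := by
  rw [conjTranspose_submatrix, ← submatrix_mul _ _ _ _ _ Function.bijective_id, hM,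
    submatrix_one f hf]

theorem l2_opNorm_conjTranspose_le_one [DecidableEq m] [DecidableEq n] {M : Matrix m n 𝕜}
    (hM : ‖M‖ ≤ 1) : ‖Mᴴ‖ ≤ 1 :=
  (l2_opNorm_conjTranspose M).trans_le hM

theorem l2_opNorm_one_le [DecidableEq n] : ‖(1 : Matrix n n 𝕜)‖ ≤ 1 :=
  IsStarProjection.norm_le _ (IsStarProjection.one _)

theorem l2_opNorm_le_one_of_conjTranspose_mul_self [DecidableEq n] {M : Matrix m n 𝕜}
    (hM : Mᴴ * M = 1) : ‖M‖ ≤ 1 := by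
  have hsq : ‖M‖ * ‖M‖ ≤ 1 := by
    rw [← l2_opNorm_conjTranspose_mul_self, hM]
    exact l2_opNorm_one_le
  nlinarith [norm_nonneg M]

theorem l2_opNorm_submatrix_id_le {n' : Type*} [Fintype n'] [DecidableEq n] [DecidableEq n']
    (M : Matrix m n 𝕜) {f : n' → n} (hf : f.Injective) : ‖M.submatrix id f‖ ≤ ‖M‖ := by
  have hfactor : M.submatrix id f = M * (1 : Matrix n n 𝕜).submatrix id f := by
    conv_lhs => rw [← Matrix.mul_one M, submatrix_mul _ _ _ _ _ Function.bijective_id]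
    rfl
  rw [hfactor]
  exact (l2_opNorm_mul _ _).trans (mul_le_of_le_one_right (norm_nonneg M)
    (l2_opNorm_le_one_of_conjTranspose_mul_self
      (conjTranspose_submatrix_mul_submatrix (by simp) hf)))

theorem l2_opNorm_submatrix_le {m' n' : Type*} [Fintype m'] [Fintype n'] [DecidableEq n]
    [DecidableEq n'] (M : Matrix m n 𝕜) {e : m' → m} {f : n' → n} (he : e.Injective)
    (hf : f.Injective) : ‖M.submatrix e f‖ ≤ ‖M‖ := by
  classical
  calc ‖M.submatrix e f‖ ≤ ‖M.submatrix e id‖ :=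
        l2_opNorm_submatrix_id_le (M.submatrix e id) hf
    _ = ‖Mᴴ.submatrix id e‖ := (l2_opNorm_conjTranspose _).symm
    _ ≤ ‖M‖ := (l2_opNorm_submatrix_id_le Mᴴ he).trans_eq (l2_opNorm_conjTranspose M)

theorem l2_opNorm_mul_conjTranspose_pow_le [DecidableEq m] [DecidableEq n] (M : Matrix m n 𝕜)
    (q : ℕ) : ‖(M * Mᴴ) ^ q‖ ≤ ‖M‖ ^ (2 * q) := by
  induction q with
  | zero => simpa using l2_opNorm_one_le
  | succ q ih =>
    have hsq : ‖M * Mᴴ‖ ≤ ‖M‖ ^ 2 :=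
      (l2_opNorm_mul M Mᴴ).trans_eq (by rw [l2_opNorm_conjTranspose, sq])
    rw [pow_succ, mul_add_one, pow_add]
    exact (norm_mul_le _ _).trans (mul_le_mul ih hsq (norm_nonneg _) (by positivity))

end Isometry

section SingularBlock

/-- The columns of `V` and of `U` span a pair of singular subspaces of `A`: in these coordinates
`A` maps the first into the second by the block `S`, and `Aᴴ` maps back by `Sᴴ`. -/
structure IsSingularBlock {𝕜 m n k l : Type*} [RCLike 𝕜] [Fintype m] [Fintype n] [Fintype k]
    [Fintype l] (A : Matrix m n 𝕜) (U : Matrix m k 𝕜) (S : Matrix k l 𝕜) (V : Matrix n l 𝕜) :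
    Prop where
  mul_right : A * V = U * S
  conjTranspose_mul_left : Aᴴ * U = V * Sᴴ

namespace IsSingularBlock

variable {𝕜 m n k l : Type*} [RCLike 𝕜] [Fintype m] [Fintype n] [Fintype k] [Fintype l]
  {A : Matrix m n 𝕜} {U : Matrix m k 𝕜} {S : Matrix k l 𝕜} {V : Matrix n l 𝕜}

theorem conjTranspose (h : IsSingularBlock A U S V) : IsSingularBlock Aᴴ V Sᴴ U where
  mul_right := h.conjTranspose_mul_left
  conjTranspose_mul_left := by simpa only [conjTranspose_conjTranspose] using h.mul_right

theorem mul_mul_conjTranspose (h : IsSingularBlock A U S V) : A * (V * Vᴴ) = U * S * Vᴴ := by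
  rw [← Matrix.mul_assoc, h.mul_right]

theorem mul_conjTranspose_mul (h : IsSingularBlock A U S V) : U * Uᴴ * A = U * S * Vᴴ := by
  have hleft := congrArg Matrix.conjTranspose h.conjTranspose_mul_left
  simp only [conjTranspose_mul, conjTranspose_conjTranspose] at hleft
  rw [Matrix.mul_assoc, hleft, Matrix.mul_assoc]

theorem pow_mul_left [DecidableEq m] [DecidableEq k] (h : IsSingularBlock A U S V) (q : ℕ) :
    (A * Aᴴ) ^ q * U = U * (S * Sᴴ) ^ q := by
  induction q with
  | zero => simp
  | succ q ih =>
    calc (A * Aᴴ) ^ (q + 1) * U = (A * Aᴴ) ^ q * (A * (Aᴴ * U)) := by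
          simp only [pow_succ, Matrix.mul_assoc]
      _ = (A * Aᴴ) ^ q * U * (S * Sᴴ) := by
          rw [h.conjTranspose_mul_left, ← Matrix.mul_assoc A, h.mul_right]
          simp only [Matrix.mul_assoc]
      _ = U * (S * Sᴴ) ^ (q + 1) := by rw [ih, pow_succ, Matrix.mul_assoc]

open scoped Matrix.Norms.L2Operator in
/- If the product were less than `1`, then `S⁻¹ Uᴴ F V = 1 - S⁻¹ Uᴴ (A - F) V` would be invertible
by the Neumann series, against the bound on the rank of `F`. -/
theorem one_le_norm_inv_mul_norm_sub [DecidableEq n] [DecidableEq l]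
    {U : Matrix m l 𝕜} {S : Matrix l l 𝕜} (h : IsSingularBlock A U S V) (hU : Uᴴ * U = 1)
    (hV : ‖V‖ ≤ 1) (hS : IsUnit S) {F : Matrix m n 𝕜} (hF : F.rank < Fintype.card l) :
    1 ≤ ‖S⁻¹‖ * ‖A - F‖ := by
  classical
  by_contra! hlt
  set W := S⁻¹ * (Uᴴ * ((A - F) * V)) with hW
  have hWF : 1 - W = S⁻¹ * Uᴴ * (F * V) := by
    have hAV : S⁻¹ * (Uᴴ * (A * V)) = 1 := by
      rw [h.mul_right, ← Matrix.mul_assoc Uᴴ, hU, Matrix.one_mul,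
        nonsing_inv_mul S ((isUnit_iff_isUnit_det S).1 hS)]
    rw [hW, Matrix.sub_mul, Matrix.mul_sub, Matrix.mul_sub, hAV, sub_sub_cancel, Matrix.mul_assoc]
  have hWn : ‖W‖ < 1 := by
    have hUn := l2_opNorm_conjTranspose_le_one (l2_opNorm_le_one_of_conjTranspose_mul_self hU)
    refine lt_of_le_of_lt ?_ hlt
    calc ‖W‖ ≤ ‖S⁻¹‖ * (‖Uᴴ‖ * (‖A - F‖ * ‖V‖)) := by
          refine (l2_opNorm_mul _ _).trans ?_
          gcongr
          refine (l2_opNorm_mul _ _).trans ?_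
          gcongr
          exact l2_opNorm_mul _ _
      _ ≤ ‖S⁻¹‖ * (1 * (‖A - F‖ * 1)) := by gcongr
      _ = ‖S⁻¹‖ * ‖A - F‖ := by rw [one_mul, mul_one]
  have hrank : (1 - W).rank ≤ F.rank := by
    rw [hWF]
    exact (rank_mul_le_right _ _).trans (rank_mul_le_left _ _)
  have : CompleteSpace (Matrix l l 𝕜) := FiniteDimensional.complete 𝕜 _
  rw [rank_of_isUnit _ (isUnit_one_sub_of_norm_lt_one hWn)] at hrank
  exact hrank.not_gt hF

end IsSingularBlock

end SingularBlock

namespace IsIdealSeminorm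

open scoped Matrix.Norms.L2Operator

variable {𝕜 : Type*} [RCLike 𝕜] {N : ∀ ⦃m n : ℕ⦄, Matrix (Fin m) (Fin n) 𝕜 → ℝ} {l m n k : ℕ}

theorem contraction_mul_le (hN : IsIdealSeminorm N) {X : Matrix (Fin l) (Fin m) 𝕜} (hX : ‖X‖ ≤ 1)
    (M : Matrix (Fin m) (Fin n) 𝕜) : N (X * M) ≤ N M :=
  (hN.mul_le_norm_mul X M).trans (mul_le_of_le_one_left (hN.nonneg M) hX)

theorem mul_contraction_le (hN : IsIdealSeminorm N) {X : Matrix (Fin m) (Fin n) 𝕜} (hX : ‖X‖ ≤ 1)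
    (M : Matrix (Fin l) (Fin m) 𝕜) : N (M * X) ≤ N M :=
  (hN.mul_le_mul_norm M X).trans (mul_le_of_le_one_right (hN.nonneg M) hX)

theorem neg_le (hN : IsIdealSeminorm N) (M : Matrix (Fin m) (Fin n) 𝕜) : N (-M) ≤ N M := by
  have hone : ‖(-1 : Matrix (Fin m) (Fin m) 𝕜)‖ ≤ 1 := (norm_neg _).trans_le l2_opNorm_one_le
  simpa only [Matrix.neg_mul, Matrix.one_mul] using hN.contraction_mul_le hone M

theorem le_mul_norm_inv (hN : IsIdealSeminorm N) {S : Matrix (Fin n) (Fin n) 𝕜} (hS : IsUnit S)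
    (M : Matrix (Fin m) (Fin n) 𝕜) : N M ≤ N (M * S) * ‖S⁻¹‖ := by
  simpa only [mul_nonsing_inv_cancel_right S M ((isUnit_iff_isUnit_det S).1 hS)] using
    hN.mul_le_mul_norm (M * S) S⁻¹

section Residual

variable {A : Matrix (Fin m) (Fin n) 𝕜} {U : Matrix (Fin m) (Fin k) 𝕜}
  {V : Matrix (Fin n) (Fin k) 𝕜} {P : Matrix (Fin m) (Fin m) 𝕜} {P' : Matrix (Fin n) (Fin n) 𝕜}

theorem residual_le (hN : IsIdealSeminorm N) {U : Matrix (Fin m) (Fin l) 𝕜}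
    {S : Matrix (Fin l) (Fin k) 𝕜} (hA : IsSingularBlock A U S V) {B : Matrix (Fin m) (Fin n) 𝕜}
    (hP : IsStarProjection P) (hB : P * B = B * P') :
    N ((1 - P) * U * S) ≤ N ((A - B) * V) + ‖(1 - P) * B‖ * N ((1 - P') * V) := by
  have hcompl : (1 - P) * B * P' = 0 := by
    rw [Matrix.mul_assoc, ← hB, ← Matrix.mul_assoc, hP.one_sub_mul_self, Matrix.zero_mul]
  have hsplit : (1 - P) * U * S = (1 - P) * ((A - B) * V) + (1 - P) * B * ((1 - P') * V) := by
    calc (1 - P) * U * S = (1 - P) * ((A - B) * V) + (1 - P) * B * V := by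
          rw [Matrix.mul_assoc, ← hA.mul_right, Matrix.sub_mul A, Matrix.mul_sub (1 - P),
            Matrix.mul_assoc _ B, sub_add_cancel]
      _ = (1 - P) * ((A - B) * V) + (1 - P) * B * ((1 - P') * V) := by
          rw [← Matrix.mul_assoc _ (1 - P'), Matrix.mul_sub ((1 - P) * B), hcompl, sub_zero,
            Matrix.mul_one]
  rw [hsplit]
  exact (hN.add_le _ _).trans (add_le_add
    (hN.contraction_mul_le (IsStarProjection.norm_le _ hP.one_sub) _) (hN.mul_le_norm_mul _ _))

/- Wedin's argument: the residuals of the left and of the right singular subspace bound each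
other, and for `g * t < 1` the two bounds can be solved for either of them. -/
theorem residual_le_of_isUnit (hN : IsIdealSeminorm N) {S : Matrix (Fin k) (Fin k) 𝕜}
    (hA : IsSingularBlock A U S V) {B : Matrix (Fin m) (Fin n) 𝕜} {g t : ℝ}
    (hP : IsStarProjection P) (hP' : IsStarProjection P') (hB : P * B = B * P')
    (hg : ‖(1 - P) * B‖ ≤ g) (hS : IsUnit S) (ht : ‖S⁻¹‖ ≤ t) :
    (1 - (g * t) ^ 2) * N ((1 - P) * U * S) ≤ N ((A - B) * V) + g * t * N ((A - B)ᴴ * U) := by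
  have hg0 : 0 ≤ g := (norm_nonneg _).trans hg
  have ht0 : 0 ≤ t := (norm_nonneg _).trans ht
  have hPH : Pᴴ = P := hP.isSelfAdjoint
  have hPH' : P'ᴴ = P' := hP'.isSelfAdjoint
  have hBH : P' * Bᴴ = Bᴴ * P := by
    simpa only [conjTranspose_mul, hPH, hPH'] using (congrArg conjTranspose hB).symm
  have hgH : ‖(1 - P') * Bᴴ‖ ≤ g := by
    rwa [← l2_opNorm_conjTranspose, conjTranspose_mul, conjTranspose_conjTranspose,
      conjTranspose_sub, conjTranspose_one, hPH', Matrix.mul_sub, ← hB, Matrix.mul_one,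
      ← Matrix.one_mul B, ← Matrix.mul_assoc P, Matrix.mul_one, ← Matrix.sub_mul]
  have hU_le : N ((1 - P) * U) ≤ N ((1 - P) * U * S) * t :=
    (hN.le_mul_norm_inv hS _).trans (mul_le_mul_of_nonneg_left ht (hN.nonneg _))
  have hV_le : N ((1 - P') * V) ≤ N ((1 - P') * V * Sᴴ) * t := by
    refine (hN.le_mul_norm_inv hS.star _).trans (mul_le_mul_of_nonneg_left ?_ (hN.nonneg _))
    rwa [star_eq_conjTranspose, ← conjTranspose_nonsing_inv, l2_opNorm_conjTranspose]
  have hleft : N ((1 - P) * U * S) ≤ N ((A - B) * V) + g * (N ((1 - P') * V * Sᴴ) * t) :=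
    (hN.residual_le hA hP hB).trans (add_le_add_right (mul_le_mul hg hV_le (hN.nonneg _) hg0) _)
  have hright : N ((1 - P') * V * Sᴴ) ≤ N ((A - B)ᴴ * U) + g * (N ((1 - P) * U * S) * t) := by
    rw [conjTranspose_sub]
    exact (hN.residual_le hA.conjTranspose hP' hBH).trans
      (add_le_add_right (mul_le_mul hgH hU_le (hN.nonneg _) hg0) _)
  linarith [mul_le_mul_of_nonneg_left hright (mul_nonneg hg0 ht0)]

theorem residual_le_of_compression (hN : IsIdealSeminorm N) {S : Matrix (Fin k) (Fin k) 𝕜}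
    (hA : IsSingularBlock A U S V) {P₀ : Matrix (Fin m) (Fin m) 𝕜} {a g t : ℝ}
    (hP₀ : IsStarProjection P₀) (hP : IsStarProjection P) (hP' : IsStarProjection P')
    (hcomm : P * (P₀ * A) = P₀ * A * P') (ha : ‖A‖ ≤ a) (hg : ‖(1 - P) * (P₀ * A)‖ ≤ g)
    (hS : IsUnit S) (ht : ‖S⁻¹‖ ≤ t) (hat : 1 ≤ a * t) (hgt : g * t < 1) :
    N ((1 - P) * U * S) ≤ a * t / (1 - g * t) * N ((1 - P₀) * U * S) := by
  have hgt0 : 0 ≤ g * t := mul_nonneg ((norm_nonneg _).trans hg) ((norm_nonneg _).trans ht)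
  have ha0 : 0 ≤ a := (norm_nonneg A).trans ha
  have hsub : A - P₀ * A = (1 - P₀) * A := by rw [Matrix.sub_mul, Matrix.one_mul]
  have hright : (A - P₀ * A) * V = (1 - P₀) * U * S := by
    rw [hsub, Matrix.mul_assoc, hA.mul_right, Matrix.mul_assoc]
  have hP₀H : (1 - P₀)ᴴ = 1 - P₀ := hP₀.one_sub.isSelfAdjoint
  have hleft : N ((A - P₀ * A)ᴴ * U) ≤ a * (N ((1 - P₀) * U * S) * t) :=
    calc N ((A - P₀ * A)ᴴ * U) = N (Aᴴ * ((1 - P₀) * U)) := by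
          rw [hsub, conjTranspose_mul, hP₀H, Matrix.mul_assoc]
      _ ≤ ‖Aᴴ‖ * N ((1 - P₀) * U) := hN.mul_le_norm_mul _ _
      _ ≤ a * (N ((1 - P₀) * U * S) * t) := by
          refine mul_le_mul ((l2_opNorm_conjTranspose A).trans_le ha) ?_ (hN.nonneg _) ha0
          exact (hN.le_mul_norm_inv hS _).trans (mul_le_mul_of_nonneg_left ht (hN.nonneg _))
  have hwedin := hN.residual_le_of_isUnit hA hP hP' hcomm hg hS ht
  rw [hright] at hwedin
  rw [div_mul_eq_mul_div, le_div_iff₀ (sub_pos.2 hgt)]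
  refine le_of_mul_le_mul_right ?_ (by linarith : 0 < 1 + g * t)
  nlinarith [mul_le_mul_of_nonneg_left hleft hgt0,
    mul_le_mul_of_nonneg_right hat (hN.nonneg ((1 - P₀) * U * S))]

end Residual

section RangeFinder

variable {k' l' r : ℕ} {A : Matrix (Fin m) (Fin n) 𝕜} {U : Matrix (Fin m) (Fin k) 𝕜}
  {V : Matrix (Fin n) (Fin l) 𝕜} {S : Matrix (Fin k) (Fin l) 𝕜} {U' : Matrix (Fin m) (Fin k') 𝕜}
  {D : Matrix (Fin k') (Fin l') 𝕜} {V' : Matrix (Fin n) (Fin l') 𝕜} {Ω : Matrix (Fin n) (Fin r) 𝕜}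
  {P : Matrix (Fin m) (Fin m) 𝕜}

theorem one_sub_mul_le (hN : IsIdealSeminorm N) (hA : A = U * S * Vᴴ + U' * D * V'ᴴ)
    (hV : ‖V‖ ≤ 1) (hU' : ‖U'‖ ≤ 1) (hV' : ‖V'‖ ≤ 1) (hP : IsStarProjection P) :
    N ((1 - P) * A) ≤ N ((1 - P) * U * S) + N D := by
  rw [hA, Matrix.mul_add]
  refine (hN.add_le _ _).trans (add_le_add ?_ ?_)
  · rw [← Matrix.mul_assoc, ← Matrix.mul_assoc]
    exact hN.mul_contraction_le (l2_opNorm_conjTranspose_le_one hV) _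
  · exact (hN.contraction_mul_le (IsStarProjection.norm_le _ hP.one_sub) _).trans
      ((hN.mul_contraction_le (l2_opNorm_conjTranspose_le_one hV') _).trans
        (hN.contraction_mul_le hU' _))

theorem residual_le_of_range (hN : IsIdealSeminorm N) {Ω' : Matrix (Fin r) (Fin l) 𝕜}
    (hA : A = U * S * Vᴴ + U' * D * V'ᴴ) (hU' : ‖U'‖ ≤ 1) (hΩ : Vᴴ * Ω * Ω' = 1)
    (hP : IsStarProjection P) (hPA : (1 - P) * (A * Ω) = 0) :
    N ((1 - P) * U * S) ≤ N D * ‖V'ᴴ * Ω * Ω'‖ := by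
  have hAΩ : A * Ω * Ω' = U * S + U' * (D * (V'ᴴ * Ω * Ω')) := by
    rw [← Matrix.mul_one (U * S), ← hΩ, hA]
    simp only [Matrix.add_mul, Matrix.mul_assoc]
  have hcancel : (1 - P) * U * S + (1 - P) * (U' * (D * (V'ᴴ * Ω * Ω'))) = 0 := by
    rw [Matrix.mul_assoc _ U, ← Matrix.mul_add, ← hAΩ, ← Matrix.mul_assoc, hPA, Matrix.zero_mul]
  rw [eq_neg_of_add_eq_zero_left hcancel]
  calc N (-((1 - P) * (U' * (D * (V'ᴴ * Ω * Ω')))))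
      ≤ N ((1 - P) * (U' * (D * (V'ᴴ * Ω * Ω')))) := hN.neg_le _
    _ ≤ N (U' * (D * (V'ᴴ * Ω * Ω'))) :=
        hN.contraction_mul_le (IsStarProjection.norm_le _ hP.one_sub) _
    _ ≤ N (D * (V'ᴴ * Ω * Ω')) := hN.contraction_mul_le hU' _
    _ ≤ N D * ‖V'ᴴ * Ω * Ω'‖ := hN.mul_le_mul_norm _ _

theorem mul_le_mul_pow (hN : IsIdealSeminorm N) {S : Matrix (Fin k) (Fin k) 𝕜} (hS : IsUnit S)
    (q : ℕ) (M : Matrix (Fin m) (Fin k) 𝕜) :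
    N (M * S) ≤ N (M * ((S * Sᴴ) ^ q * S)) * ‖S⁻¹‖ ^ (2 * q) := by
  have hunit : IsUnit ((Sᴴ * S) ^ q) := (hS.star.mul hS).pow q
  have hinv : ((Sᴴ * S) ^ q)⁻¹ = (S⁻¹ * S⁻¹ᴴ) ^ q := by
    rw [← Matrix.inv_pow', Matrix.mul_inv_rev, conjTranspose_nonsing_inv]
  have h := hN.le_mul_norm_inv hunit (M * S)
  rw [hinv, Matrix.mul_assoc, ← mul_pow_mul] at h
  exact h.trans (mul_le_mul_of_nonneg_left (l2_opNorm_mul_conjTranspose_pow_le S⁻¹ q) (hN.nonneg _))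

theorem residual_le_of_powerIteration (hN : IsIdealSeminorm N) {S : Matrix (Fin k) (Fin k) 𝕜}
    {V : Matrix (Fin n) (Fin k) 𝕜} {Ω' : Matrix (Fin r) (Fin k) 𝕜} {g t : ℝ} (q : ℕ)
    (hUV : IsSingularBlock A U S V) (hUV' : IsSingularBlock A U' D V')
    (hA : A = U * S * Vᴴ + U' * D * V'ᴴ) (hU' : ‖U'‖ ≤ 1) (hΩ : Vᴴ * Ω * Ω' = 1)
    (hP : IsStarProjection P) (hPA : (1 - P) * ((A * Aᴴ) ^ q * A * Ω) = 0)
    (hS : IsUnit S) (ht : ‖S⁻¹‖ ≤ t) (hg : ‖D‖ ≤ g) :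
    N ((1 - P) * U * S) ≤ (g * t) ^ (2 * q) * (N D * ‖V'ᴴ * Ω * Ω'‖) := by
  have hpow : (A * Aᴴ) ^ q * A =
      U * ((S * Sᴴ) ^ q * S) * Vᴴ + U' * ((D * Dᴴ) ^ q * D) * V'ᴴ := by
    calc (A * Aᴴ) ^ q * A = (A * Aᴴ) ^ q * (U * S * Vᴴ + U' * D * V'ᴴ) := by rw [← hA]
      _ = (A * Aᴴ) ^ q * U * (S * Vᴴ) + (A * Aᴴ) ^ q * U' * (D * V'ᴴ) := by
          simp only [Matrix.mul_add, Matrix.mul_assoc]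
      _ = _ := by
          rw [hUV.pow_mul_left, hUV'.pow_mul_left]
          simp only [Matrix.mul_assoc]
  have hD : N ((D * Dᴴ) ^ q * D) ≤ g ^ (2 * q) * N D :=
    (hN.mul_le_norm_mul _ _).trans (mul_le_mul_of_nonneg_right
      ((l2_opNorm_mul_conjTranspose_pow_le D q).trans (by gcongr)) (hN.nonneg D))
  have hg0 : 0 ≤ g := (norm_nonneg D).trans hg
  calc N ((1 - P) * U * S)
      ≤ N ((1 - P) * U * ((S * Sᴴ) ^ q * S)) * ‖S⁻¹‖ ^ (2 * q) := hN.mul_le_mul_pow hS q _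
    _ ≤ g ^ (2 * q) * N D * ‖V'ᴴ * Ω * Ω'‖ * t ^ (2 * q) := by
        have := hN.nonneg D
        gcongr
        exact (hN.residual_le_of_range hpow hU' hΩ hP hPA).trans (by gcongr)
    _ = (g * t) ^ (2 * q) * (N D * ‖V'ᴴ * Ω * Ω'‖) := by ring

end RangeFinder

end IsIdealSeminorm

section Columns

theorem mul_submatrix_eq_mul {R m p n p' n' : Type*} [NonUnitalNonAssocSemiring R] [Fintype p]
    [Fintype p'] (M : Matrix m p R) {D : Matrix p n R} {e : p' → p} {f : n' → n}
    (he : e.Injective) (hD : ∀ i ∉ Set.range e, ∀ j, D i (f j) = 0) :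
    (M * D).submatrix id f = M.submatrix id e * D.submatrix e f := by
  ext i j
  exact (Fintype.sum_of_injective e he _ _ (fun x hx => by simp only [hD x hx, mul_zero])
    fun _ => rfl).symm

theorem IsSingularBlock.submatrix {𝕜 m n k l k' l' : Type*} [RCLike 𝕜] [Fintype m] [Fintype n]
    [Fintype k] [Fintype l] [Fintype k'] [Fintype l'] {A : Matrix m n 𝕜} {U : Matrix m k 𝕜}
    {S : Matrix k l 𝕜} {V : Matrix n l 𝕜} (h : IsSingularBlock A U S V) {e : k' → k} {f : l' → l}
    (he : e.Injective) (hf : f.Injective) (hrow : ∀ i ∉ Set.range e, ∀ j, S i (f j) = 0)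
    (hcol : ∀ j ∉ Set.range f, ∀ i, S (e i) j = 0) :
    IsSingularBlock A (U.submatrix id e) (S.submatrix e f) (V.submatrix id f) where
  mul_right := by
    rw [← mul_submatrix_eq_mul U he hrow, ← h.mul_right]
    rfl
  conjTranspose_mul_left := by
    rw [conjTranspose_submatrix, ← mul_submatrix_eq_mul V hf fun j hj i => ?_,
      ← h.conjTranspose_mul_left]
    · rfl
    · rw [conjTranspose_apply, hcol j hj i, star_zero]

theorem mul_conjTranspose_eq_cols {m n k l : ℕ} (M : Matrix (Fin m) (Fin (k + l)) ℂ)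
    (M' : Matrix (Fin n) (Fin (k + l)) ℂ) :
    M * M'ᴴ = colsL M * (colsL M')ᴴ + colsR M * (colsR M')ᴴ := by
  ext i j
  exact Fin.sum_univ_add _

end Columns

open scoped ComplexOrder in
theorem mul_rpinv_cancel {a b : ℕ} {M : Matrix (Fin a) (Fin b) ℂ} (hM : M.rank = a) :
    M * rpinv M = 1 := by
  have hunit : IsUnit (M * Mᴴ) := by
    rw [← linearIndependent_rows_iff_isUnit, linearIndependent_iff_card_eq_finrank_span,
      Set.finrank, ← rank_eq_finrank_span_row, rank_self_mul_conjTranspose, hM, Fintype.card_fin]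
  rw [rpinv, ← Matrix.mul_assoc, mul_nonsing_inv _ ((isUnit_iff_isUnit_det _).1 hunit)]

section DiagRect

open scoped Matrix.Norms.L2Operator

variable {σ : ℕ → ℝ}

theorem diagRect_submatrix_castLE {a b a' b' : ℕ} (off : ℕ) (ha : a' ≤ a) (hb : b' ≤ b) :
    (diagRect σ off a b).submatrix (Fin.castLE ha) (Fin.castLE hb) = diagRect σ off a' b' :=
  rfl

theorem diagRect_submatrix_natAdd (k a b : ℕ) :
    (diagRect σ 0 (k + a) (k + b)).submatrix (Fin.natAdd k) (Fin.natAdd k) = diagRect σ k a b := by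
  ext i j
  simp [diagRect]

theorem diagRect_self (off c : ℕ) :
    diagRect σ off c c = diagonal fun i : Fin c => (σ (off + i) : ℂ) := by
  ext i j
  simp [diagRect, diagonal_apply, Fin.ext_iff]

theorem l2_opNorm_diagRect_le (hσ : ∀ i, 0 ≤ σ i) (hσ' : Antitone σ) (off a b : ℕ) :
    ‖diagRect σ off a b‖ ≤ σ off := by
  rw [← diagRect_submatrix_castLE off (le_max_left a b) (le_max_right a b)]
  refine (l2_opNorm_submatrix_le _ (Fin.castLE_injective _) (Fin.castLE_injective _)).trans ?_
  rw [diagRect_self, l2_opNorm_diagonal]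
  refine (pi_norm_le_iff_of_nonneg (hσ off)).2 fun i => ?_
  rw [Complex.norm_of_nonneg (hσ _)]
  exact hσ' (Nat.le_add_right off i)

theorem isUnit_diagRect {c : ℕ} (hσ : ∀ i < c, σ i ≠ 0) : IsUnit (diagRect σ 0 c c) := by
  rw [diagRect_self, isUnit_diagonal, Pi.isUnit_iff]
  exact fun i => (Complex.ofReal_ne_zero.2 (by simpa using hσ i i.2)).isUnit

theorem l2_opNorm_inv_diagRect_le {c : ℕ} {s : ℝ} (hs : 0 < s) (hσ : ∀ i < c, s ≤ σ i) :
    ‖(diagRect σ 0 c c)⁻¹‖ ≤ s⁻¹ := by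
  have hinv : (diagRect σ 0 c c)⁻¹ = diagonal fun i : Fin c => (((σ i)⁻¹ : ℝ) : ℂ) := by
    refine inv_eq_right_inv ?_
    rw [diagRect_self, diagonal_mul_diagonal, ← diagonal_one]
    congr! 2 with i
    rw [zero_add, ← Complex.ofReal_mul, mul_inv_cancel₀ (hs.trans_le (hσ i i.2)).ne',
      Complex.ofReal_one]
  rw [hinv, l2_opNorm_diagonal]
  refine (pi_norm_le_iff_of_nonneg (inv_nonneg.2 hs.le)).2 fun i => ?_
  rw [Complex.norm_of_nonneg (inv_nonneg.2 (hs.le.trans (hσ i i.2)))]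
  exact inv_anti₀ hs (hσ i i.2)

end DiagRect

/-- `A = U Σ Vᴴ` is a singular value decomposition, full or thin: `U` and `V` have orthonormal
columns but need not be square. Only the entries `σ 0, …, σ (min a b - 1)` enter the equation. -/
structure IsSVD {m n a b : ℕ} (A : Matrix (Fin m) (Fin n) ℂ) (U : Matrix (Fin m) (Fin a) ℂ)
    (σ : ℕ → ℝ) (V : Matrix (Fin n) (Fin b) ℂ) : Prop where
  left : Uᴴ * U = 1
  right : Vᴴ * V = 1
  nonneg : ∀ i, 0 ≤ σ i
  antitone : Antitone σ
  eq_mul : A = U * diagRect σ 0 a b * Vᴴ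

namespace IsSVD

open scoped Matrix.Norms.L2Operator

section General

variable {m n a b : ℕ} {A : Matrix (Fin m) (Fin n) ℂ} {U : Matrix (Fin m) (Fin a) ℂ} {σ : ℕ → ℝ}
  {V : Matrix (Fin n) (Fin b) ℂ}

theorem isSingularBlock (h : IsSVD A U σ V) : IsSingularBlock A U (diagRect σ 0 a b) V where
  mul_right := by rw [h.eq_mul, Matrix.mul_assoc, h.right, Matrix.mul_one]
  conjTranspose_mul_left := by
    simp only [h.eq_mul, conjTranspose_mul, conjTranspose_conjTranspose, Matrix.mul_assoc, h.left,
      Matrix.mul_one]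

theorem isSingularBlock_castLE (h : IsSVD A U σ V) {c : ℕ} (ha : c ≤ a) (hb : c ≤ b) :
    IsSingularBlock A (U.submatrix id (Fin.castLE ha)) (diagRect σ 0 c c)
      (V.submatrix id (Fin.castLE hb)) := by
  rw [← diagRect_submatrix_castLE 0 ha hb]
  refine h.isSingularBlock.submatrix (Fin.castLE_injective ha) (Fin.castLE_injective hb)
    (fun i hi j => if_neg fun hij => hi ?_) (fun j hj i => if_neg fun hij => hj ?_)
  · exact ⟨j, Fin.ext hij.symm⟩
  · exact ⟨i, Fin.ext hij⟩

theorem l2_opNorm_le (h : IsSVD A U σ V) : ‖A‖ ≤ σ 0 := by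
  have hN := isIdealSeminorm_l2_opNorm (𝕜 := ℂ)
  have hU := l2_opNorm_le_one_of_conjTranspose_mul_self h.left
  have hV := l2_opNorm_le_one_of_conjTranspose_mul_self h.right
  rw [h.eq_mul]
  exact (hN.mul_contraction_le (l2_opNorm_conjTranspose_le_one hV) _).trans
    ((hN.contraction_mul_le hU _).trans (l2_opNorm_diagRect_le h.nonneg h.antitone 0 a b))

theorem isometry_mul (h : IsSVD A U σ V) {l : ℕ} {Q : Matrix (Fin l) (Fin m) ℂ}
    (hQ : Qᴴ * Q = 1) : IsSVD (Q * A) (Q * U) σ V where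
  left := by
    rw [conjTranspose_mul, Matrix.mul_assoc, ← Matrix.mul_assoc Qᴴ, hQ, Matrix.one_mul, h.left]
  right := h.right
  nonneg := h.nonneg
  antitone := h.antitone
  eq_mul := by rw [h.eq_mul]; simp only [Matrix.mul_assoc]

theorem le_l2_opNorm_sub (h : IsSVD A U σ V) {F : Matrix (Fin m) (Fin n) ℂ} {k : ℕ}
    (hF : F.rank ≤ k) (ha : k < a) (hb : k < b) : σ k ≤ ‖A - F‖ := by
  rcases (h.nonneg k).eq_or_lt with hzero | hpos
  · exact hzero ▸ norm_nonneg _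
  have hσ : ∀ i < k + 1, σ k ≤ σ i := fun i hi => h.antitone (Nat.le_of_lt_succ hi)
  have hV := conjTranspose_submatrix_mul_submatrix h.right (Fin.castLE_injective hb)
  have hone := (h.isSingularBlock_castLE ha hb).one_le_norm_inv_mul_norm_sub
    (conjTranspose_submatrix_mul_submatrix h.left (Fin.castLE_injective ha))
    (l2_opNorm_le_one_of_conjTranspose_mul_self hV)
    (isUnit_diagRect fun i hi => (hpos.trans_le (hσ i hi)).ne')
    (hF.trans_lt ((Nat.lt_succ_self k).trans_eq (Fintype.card_fin _).symm))
  have hle : 1 ≤ (σ k)⁻¹ * ‖A - F‖ :=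
    hone.trans (mul_le_mul_of_nonneg_right (l2_opNorm_inv_diagRect_le hpos hσ) (norm_nonneg _))
  rwa [← div_eq_inv_mul, one_le_div hpos] at hle

end General

section Split

variable {m n k a b : ℕ} {A : Matrix (Fin m) (Fin n) ℂ} {U : Matrix (Fin m) (Fin (k + a)) ℂ}
  {σ : ℕ → ℝ} {V : Matrix (Fin n) (Fin (k + b)) ℂ}

theorem isSingularBlock_colsL (h : IsSVD A U σ V) :
    IsSingularBlock A (colsL U) (diagRect σ 0 k k) (colsL V) :=
  h.isSingularBlock_castLE (Nat.le_add_right k a) (Nat.le_add_right k b)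

theorem isSingularBlock_colsR (h : IsSVD A U σ V) :
    IsSingularBlock A (colsR U) (diagRect σ k a b) (colsR V) := by
  rw [← diagRect_submatrix_natAdd]
  refine h.isSingularBlock.submatrix (Fin.natAdd_injective a k) (Fin.natAdd_injective b k)
    (fun i hi j => if_neg fun hij => hi ?_) (fun j hj i => if_neg fun hij => hj ?_)
  · exact ⟨⟨j, by rw [Fin.val_natAdd] at hij; omega⟩, Fin.ext hij.symm⟩
  · exact ⟨⟨i, by rw [Fin.val_natAdd] at hij; omega⟩, Fin.ext hij⟩

theorem eq_add (h : IsSVD A U σ V) :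
    A = colsL U * diagRect σ 0 k k * (colsL V)ᴴ + colsR U * diagRect σ k a b * (colsR V)ᴴ := by
  rw [← h.isSingularBlock_colsL.mul_right, ← h.isSingularBlock_colsR.mul_right]
  conv_lhs => rw [h.eq_mul, ← h.isSingularBlock.mul_right, mul_conjTranspose_eq_cols]
  rfl

theorem conjTranspose_colsL_left (h : IsSVD A U σ V) : (colsL U)ᴴ * colsL U = 1 :=
  conjTranspose_submatrix_mul_submatrix h.left (Fin.castAdd_injective k a)

theorem conjTranspose_colsR_left (h : IsSVD A U σ V) : (colsR U)ᴴ * colsR U = 1 :=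
  conjTranspose_submatrix_mul_submatrix h.left (Fin.natAdd_injective a k)

theorem conjTranspose_colsL_right (h : IsSVD A U σ V) : (colsL V)ᴴ * colsL V = 1 :=
  conjTranspose_submatrix_mul_submatrix h.right (Fin.castAdd_injective k b)

theorem conjTranspose_colsR_right (h : IsSVD A U σ V) : (colsR V)ᴴ * colsR V = 1 :=
  conjTranspose_submatrix_mul_submatrix h.right (Fin.natAdd_injective b k)

theorem sub_truncation_eq (h : IsSVD A U σ V) :
    A - colsL U * diagRect σ 0 k k * (colsL V)ᴴ = colsR U * diagRect σ k a b * (colsR V)ᴴ :=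
  sub_eq_iff_eq_add'.2 h.eq_add

theorem one_sub_mul_eq (h : IsSVD A U σ V) :
    (1 - colsL U * (colsL U)ᴴ) * A = colsR U * diagRect σ k a b * (colsR V)ᴴ := by
  rw [Matrix.sub_mul, Matrix.one_mul, h.isSingularBlock_colsL.mul_conjTranspose_mul,
    h.sub_truncation_eq]

theorem l2_opNorm_colsR_mul_le (h : IsSVD A U σ V) :
    ‖colsR U * diagRect σ k a b * (colsR V)ᴴ‖ ≤ ‖diagRect σ k a b‖ := by
  have hN := isIdealSeminorm_l2_opNorm (𝕜 := ℂ)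
  have hU := l2_opNorm_le_one_of_conjTranspose_mul_self h.conjTranspose_colsR_left
  have hV := l2_opNorm_le_one_of_conjTranspose_mul_self h.conjTranspose_colsR_right
  exact (hN.mul_contraction_le (l2_opNorm_conjTranspose_le_one hV) _).trans
    (hN.contraction_mul_le hU _)

theorem l2_opNorm_one_sub_mul_le (h : IsSVD A U σ V) {F : Matrix (Fin m) (Fin n) ℂ}
    (hF : F.rank ≤ k) : ‖(1 - colsL U * (colsL U)ᴴ) * A‖ ≤ ‖A - F‖ := by
  rw [h.one_sub_mul_eq]
  refine h.l2_opNorm_colsR_mul_le.trans ?_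
  rcases a.eq_zero_or_pos with rfl | ha
  · exact (congrArg norm (Subsingleton.elim _ 0)).trans_le (norm_zero.trans_le (norm_nonneg _))
  rcases b.eq_zero_or_pos with rfl | hb
  · exact (congrArg norm (Subsingleton.elim _ 0)).trans_le (norm_zero.trans_le (norm_nonneg _))
  exact (l2_opNorm_diagRect_le h.nonneg h.antitone k a b).trans
    (h.le_l2_opNorm_sub hF (Nat.lt_add_of_pos_right ha) (Nat.lt_add_of_pos_right hb))

end Split

section Projection

variable {m n l k a b c d : ℕ} {A : Matrix (Fin m) (Fin n) ℂ} {U : Matrix (Fin m) (Fin (k + a)) ℂ}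
  {σ τ : ℕ → ℝ} {V : Matrix (Fin n) (Fin (k + b)) ℂ} {Q : Matrix (Fin m) (Fin l) ℂ}
  {X : Matrix (Fin l) (Fin (k + c)) ℂ} {Y : Matrix (Fin n) (Fin (k + d)) ℂ}

theorem mul_truncation_eq (hB : IsSVD (Qᴴ * A) X τ Y) :
    Q * (colsL X * diagRect τ 0 k k * (colsL Y)ᴴ) = colsL (Q * X) * (colsL (Q * X))ᴴ * A := by
  have hcols : colsL (Q * X) = Q * colsL X := rfl
  rw [← hB.isSingularBlock_colsL.mul_conjTranspose_mul, hcols, conjTranspose_mul]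
  simp only [Matrix.mul_assoc]

theorem l2_opNorm_one_sub_mul_compression_le (hA : IsSVD A U σ V) (hB : IsSVD (Qᴴ * A) X τ Y)
    (hQ : Qᴴ * Q = 1) : ‖(1 - colsL (Q * X) * (colsL (Q * X))ᴴ) * (Q * Qᴴ * A)‖ ≤ σ k := by
  have hN := isIdealSeminorm_l2_opNorm (𝕜 := ℂ)
  set F := Q * Qᴴ * (colsL U * diagRect σ 0 k k * (colsL V)ᴴ) with hF
  have hrank : F.rank ≤ k :=
    calc F.rank ≤ (colsL U * (diagRect σ 0 k k * (colsL V)ᴴ)).rank := by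
          rw [← Matrix.mul_assoc]
          exact rank_mul_le_right _ _
      _ ≤ (colsL U).rank := rank_mul_le_left _ _
      _ ≤ k := rank_le_width _
  have hdiff : Q * Qᴴ * A - F = Q * Qᴴ * (colsR U * diagRect σ k a b * (colsR V)ᴴ) := by
    rw [hF, ← Matrix.mul_sub, hA.sub_truncation_eq]
  rw [Matrix.mul_assoc Q] at hdiff ⊢
  refine ((hB.isometry_mul hQ).l2_opNorm_one_sub_mul_le hrank).trans ?_
  rw [hdiff]
  exact (hN.contraction_mul_le
      (IsStarProjection.norm_le _ (isStarProjection_mul_conjTranspose hQ)) _).trans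
    (hA.l2_opNorm_colsR_mul_le.trans (l2_opNorm_diagRect_le hA.nonneg hA.antitone k a b))

end Projection

end IsSVD

section Truncation

open scoped Matrix.Norms.L2Operator

variable {m n l r k a b c d : ℕ} {N : ∀ ⦃m n : ℕ⦄, Matrix (Fin m) (Fin n) ℂ → ℝ}
  {A : Matrix (Fin m) (Fin n) ℂ} {U : Matrix (Fin m) (Fin (k + a)) ℂ} {σ τ : ℕ → ℝ}
  {V : Matrix (Fin n) (Fin (k + b)) ℂ} {Q : Matrix (Fin m) (Fin l) ℂ}
  {X : Matrix (Fin l) (Fin (k + c)) ℂ} {Y : Matrix (Fin n) (Fin (k + d)) ℂ}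

theorem residual_truncation_le (hN : IsIdealSeminorm N) (hA : IsSVD A U σ V)
    (hgap : σ k < σ (k - 1)) (hQ : Qᴴ * Q = 1) (hB : IsSVD (Qᴴ * A) X τ Y) :
    N ((1 - colsL (Q * X) * (colsL (Q * X))ᴴ) * colsL U * diagRect σ 0 k k) ≤
      σ 0 / σ (k - 1) / (1 - σ k / σ (k - 1)) * N ((1 - Q * Qᴴ) * colsL U * diagRect σ 0 k k) := by
  have hpos : 0 < σ (k - 1) := (hA.nonneg k).trans_lt hgap
  have hσ : ∀ i < k, σ (k - 1) ≤ σ i := fun i hi => hA.antitone (Nat.le_sub_one_of_lt hi)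
  have hQX := hB.isometry_mul hQ
  have hcomm : colsL (Q * X) * (colsL (Q * X))ᴴ * (Q * Qᴴ * A) =
      Q * Qᴴ * A * (colsL Y * (colsL Y)ᴴ) := by
    rw [Matrix.mul_assoc Q, hQX.isSingularBlock_colsL.mul_conjTranspose_mul,
      hQX.isSingularBlock_colsL.mul_mul_conjTranspose]
  simp only [div_eq_mul_inv (σ _) (σ (k - 1))]
  refine hN.residual_le_of_compression hA.isSingularBlock_colsL
    (isStarProjection_mul_conjTranspose hQ)
    (isStarProjection_mul_conjTranspose hQX.conjTranspose_colsL_left)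
    (isStarProjection_mul_conjTranspose hQX.conjTranspose_colsL_right) hcomm hA.l2_opNorm_le
    (hA.l2_opNorm_one_sub_mul_compression_le hB hQ)
    (isUnit_diagRect fun i hi => (hpos.trans_le (hσ i hi)).ne')
    (l2_opNorm_inv_diagRect_le hpos hσ) ?_ ?_
  · rw [← div_eq_mul_inv, one_le_div hpos]
    exact hA.antitone (Nat.zero_le _)
  · rwa [← div_eq_mul_inv, div_lt_one hpos]

theorem residual_rangeFinder_le (hN : IsIdealSeminorm N) (hA : IsSVD A U σ V) (q : ℕ)
    (hpos : 0 < σ (k - 1)) {Ω : Matrix (Fin n) (Fin r) ℂ} (hΩ : ((colsL V)ᴴ * Ω).rank = k)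
    {R : Matrix (Fin l) (Fin r) ℂ} (hQ : Qᴴ * Q = 1) (hQR : (A * Aᴴ) ^ q * A * Ω = Q * R) :
    N ((1 - Q * Qᴴ) * colsL U * diagRect σ 0 k k) ≤ (σ k / σ (k - 1)) ^ (2 * q) *
      (N (diagRect σ k a b) * ‖(colsR V)ᴴ * Ω * rpinv ((colsL V)ᴴ * Ω)‖) := by
  have hσ : ∀ i < k, σ (k - 1) ≤ σ i := fun i hi => hA.antitone (Nat.le_sub_one_of_lt hi)
  have hrange : (1 - Q * Qᴴ) * ((A * Aᴴ) ^ q * A * Ω) = 0 := by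
    rw [hQR, Matrix.sub_mul, Matrix.one_mul, Matrix.mul_assoc, ← Matrix.mul_assoc Qᴴ, hQ,
      Matrix.one_mul, sub_self]
  exact hN.residual_le_of_powerIteration q hA.isSingularBlock_colsL hA.isSingularBlock_colsR
    hA.eq_add (l2_opNorm_le_one_of_conjTranspose_mul_self hA.conjTranspose_colsR_left)
    (mul_rpinv_cancel hΩ) (isStarProjection_mul_conjTranspose hQ) hrange
    (isUnit_diagRect fun i hi => (hpos.trans_le (hσ i hi)).ne')
    (l2_opNorm_inv_diagRect_le hpos hσ) (l2_opNorm_diagRect_le hA.nonneg hA.antitone k a b)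

theorem lowrank_error_truncated_general (hN : IsIdealSeminorm N) (hA : IsSVD A U σ V) (q : ℕ)
    (hgap : σ k < σ (k - 1)) {Ω : Matrix (Fin n) (Fin r) ℂ} (hΩ : ((colsL V)ᴴ * Ω).rank = k)
    {R : Matrix (Fin l) (Fin r) ℂ} (hQ : Qᴴ * Q = 1) (hQR : (A * Aᴴ) ^ q * A * Ω = Q * R)
    (hB : IsSVD (Qᴴ * A) X τ Y) :
    N (A - Q * (colsL X * diagRect τ 0 k k * (colsL Y)ᴴ)) ≤
      (1 + σ 0 / σ (k - 1) * ((σ k / σ (k - 1)) ^ (2 * q) / (1 - σ k / σ (k - 1))) *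
        ‖(colsR V)ᴴ * Ω * rpinv ((colsL V)ᴴ * Ω)‖) * N (diagRect σ k a b) := by
  set P := colsL (Q * X) * (colsL (Q * X))ᴴ
  set w := ‖(colsR V)ᴴ * Ω * rpinv ((colsL V)ᴴ * Ω)‖
  have hpos : 0 < σ (k - 1) := (hA.nonneg k).trans_lt hgap
  have hP : IsStarProjection P :=
    isStarProjection_mul_conjTranspose (hB.isometry_mul hQ).conjTranspose_colsL_left
  have hcoef : 0 ≤ σ 0 / σ (k - 1) / (1 - σ k / σ (k - 1)) :=
    div_nonneg (div_nonneg (hA.nonneg 0) hpos.le) (sub_nonneg.2 ((div_le_one hpos).2 hgap.le))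
  calc N (A - Q * (colsL X * diagRect τ 0 k k * (colsL Y)ᴴ)) = N ((1 - P) * A) := by
        rw [hB.mul_truncation_eq, Matrix.sub_mul, Matrix.one_mul]
    _ ≤ N ((1 - P) * colsL U * diagRect σ 0 k k) + N (diagRect σ k a b) :=
        hN.one_sub_mul_le hA.eq_add
          (l2_opNorm_le_one_of_conjTranspose_mul_self hA.conjTranspose_colsL_right)
          (l2_opNorm_le_one_of_conjTranspose_mul_self hA.conjTranspose_colsR_left)
          (l2_opNorm_le_one_of_conjTranspose_mul_self hA.conjTranspose_colsR_right) hP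
    _ ≤ σ 0 / σ (k - 1) / (1 - σ k / σ (k - 1)) *
          ((σ k / σ (k - 1)) ^ (2 * q) * (N (diagRect σ k a b) * w)) + N (diagRect σ k a b) := by
        gcongr
        exact (residual_truncation_le hN hA hgap hQ hB).trans (mul_le_mul_of_nonneg_left
          (residual_rangeFinder_le hN hA q hpos hΩ hQ hQR) hcoef)
    _ = _ := by ring

end Truncation

/-- Theorem 4.1, bound (4.3): error of the truncated approximation `Q·B_k`
in the spectral and Frobenius norms. -/
theorem lowrank_error_truncated
    {k m₂ n₂ ρ : ℕ} (q : ℕ) (hk : 1 ≤ k)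
    (A : Matrix (Fin (k + m₂)) (Fin (k + n₂)) ℂ)
    (U : Matrix (Fin (k + m₂)) (Fin (k + m₂)) ℂ)
    (V : Matrix (Fin (k + n₂)) (Fin (k + n₂)) ℂ)
    (σ : ℕ → ℝ)
    (hU : Uᴴ * U = 1) (hU' : U * Uᴴ = 1)
    (hV : Vᴴ * V = 1) (hV' : V * Vᴴ = 1)
    (hσ0 : ∀ i, 0 ≤ σ i) (hσm : ∀ i j, i ≤ j → σ j ≤ σ i)
    (hA : A = U * diagRect σ 0 (k + m₂) (k + n₂) * Vᴴ)
    (hrank : 0 < σ (k - 1)) (hgap : σ k < σ (k - 1))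
    (Ω : Matrix (Fin (k + n₂)) (Fin (k + ρ)) ℂ)
    (hΩ : ((colsL V)ᴴ * Ω).rank = k)
    (Q : Matrix (Fin (k + m₂)) (Fin (k + ρ)) ℂ)
    (R : Matrix (Fin (k + ρ)) (Fin (k + ρ)) ℂ)
    (hQ : Qᴴ * Q = 1) (hR : R.BlockTriangular id)
    (hQR : (A * Aᴴ) ^ q * A * Ω = Q * R)
    (UB : Matrix (Fin (k + ρ)) (Fin (k + ρ)) ℂ)
    (Vh : Matrix (Fin (k + n₂)) (Fin (k + ρ)) ℂ)
    (σh : ℕ → ℝ)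
    (hUB : UBᴴ * UB = 1) (hUB' : UB * UBᴴ = 1)
    (hVh : Vhᴴ * Vh = 1)
    (hσh0 : ∀ i, 0 ≤ σh i) (hσhm : ∀ i j, i ≤ j → σh j ≤ σh i)
    (hB : Qᴴ * A = UB * diagRect σh 0 (k + ρ) (k + ρ) * Vhᴴ)
    :
    ∀ p ∈ ({2, ⊤} : Set ℝ≥0∞),
      schatten p (A - Q * (colsL UB * diagRect σh 0 k k * (colsL Vh)ᴴ)) ≤
        (1 + σ 0 / σ (k - 1) * ((σ k / σ (k - 1)) ^ (2 * q) / (1 - (σ k / σ (k - 1)))) * sval ((colsR V)ᴴ * Ω * rpinv ((colsL V)ᴴ * Ω)) 0) *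
          schatten p (diagRect σ k m₂ n₂) := by
  intro p hp
  rw [sval_zero]
  exact lowrank_error_truncated_general (isIdealSeminorm_schatten hp) ⟨hU, hV, hσ0, hσm, hA⟩ q hgap
    hΩ hQ hQR ⟨hUB, hVh, hσh0, hσhm, hB⟩
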